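/- Let (X,μ) be a probability space, T an ergodic invertible measure-preserving transformation, and D(j) ⊆ X measurable sets with μ(D(j)) → a > 0 and μ(D(j) Δ T D(j)) → 0. Then for all measurable sets A, B: μ(D(j) ∩ A ∩ B) − a·μ(A ∩ B) → 0; equivalently, the multiplication operators by the indicator of D(j) converge weakly to a·I on L²(X,μ). -/

import Mathlib

open MeasureTheory Filter

/-!
Let `U` be the Koopman isometry `f ↦ f ∘ T` of `L²(μ)` and `u j` the indicator of `D j`. Since
`⟪u j, U g - g⟫ = ⟪u j - U (u j), U g⟫`, the bounded, asymptotically invariant family `u j` tends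
weakly to `0` against every `U g - g`. A vector orthogonal to all `U g - g` is fixed by `U`, hence
constant by ergodicity, and against the constant `1` the family gives `μ (D j)`. Therefore `u j`
tends weakly to the constant `a`; testing against the indicator of `A ∩ B` gives the theorem.
-/

open scoped Topology symmDiff InnerProductSpace ENNReal

section Hilbert

variable {𝕜 E ι : Type*} [RCLike 𝕜] [NormedAddCommGroup E] [InnerProductSpace 𝕜 E]
  {l : Filter ι} {u : ι → E} {M : ℝ}

variable (𝕜 l u) in
/-- The submodule of vectors `f` with `⟪u i, f⟫ → 0` along `l`; the family `u` tends weakly to `0`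
exactly when it is the whole space. -/
def weaklyNullSubmodule : Submodule 𝕜 E where
  carrier := {f | Tendsto (fun i => ⟪u i, f⟫_𝕜) l (𝓝 0)}
  zero_mem' := by simp [tendsto_const_nhds]
  add_mem' hf hg := by simpa [inner_add_right] using hf.add hg
  smul_mem' c f hf := by simpa [inner_smul_right] using hf.const_mul c

theorem mem_weaklyNullSubmodule {f : E} :
    f ∈ weaklyNullSubmodule 𝕜 l u ↔ Tendsto (fun i => ⟪u i, f⟫_𝕜) l (𝓝 0) :=
  Iff.rfl

theorem isClosed_weaklyNullSubmodule (hM : ∀ i, ‖u i‖ ≤ M) :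
    IsClosed (weaklyNullSubmodule 𝕜 l u : Set E) := by
  have hLip (i : ι) : LipschitzWith M.toNNReal fun f => ⟪u i, f⟫_𝕜 :=
    LipschitzWith.of_dist_le_mul fun f g => by
      rw [dist_eq_norm, dist_eq_norm, ← inner_sub_right]
      exact (norm_inner_le_norm _ _).trans <|
        mul_le_mul_of_nonneg_right ((hM i).trans M.le_coe_toNNReal) (norm_nonneg _)
  exact (LipschitzWith.uniformEquicontinuous _ _ hLip).equicontinuous.isClosed_setOfPred_tendsto
    continuous_const

theorem map_sub_self_mem_weaklyNullSubmodule (U : E →ₗᵢ[𝕜] E)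
    (hU : Tendsto (fun i => ‖U (u i) - u i‖) l (𝓝 0)) (g : E) :
    U g - g ∈ weaklyNullSubmodule 𝕜 l u := by
  refine mem_weaklyNullSubmodule.2 <|
    squeeze_zero_norm (fun i => ?_) (by simpa using hU.mul_const ‖g‖)
  calc ‖⟪u i, U g - g⟫_𝕜‖ = ‖⟪u i - U (u i), U g⟫_𝕜‖ := by
        rw [inner_sub_right, inner_sub_left, U.inner_map_map]
    _ ≤ ‖u i - U (u i)‖ * ‖U g‖ := norm_inner_le_norm _ _
    _ = ‖U (u i) - u i‖ * ‖g‖ := by rw [norm_sub_rev, U.norm_map]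

theorem map_eq_self_of_forall_inner_map_sub_self_eq_zero (U : E →ₗᵢ[𝕜] E) {x : E}
    (hx : ∀ g, ⟪U g - g, x⟫_𝕜 = 0) : U x = x := by
  have hUx : ⟪U x, x⟫_𝕜 = ⟪x, x⟫_𝕜 := by simpa [inner_sub_left, sub_eq_zero] using hx x
  refine eq_of_norm_le_re_inner_eq_norm_sq (𝕜 := 𝕜) (U.norm_map x).le ?_
  rw [hUx, inner_self_eq_norm_sq]

theorem submodule_eq_top_of_map_sub_self_mem_of_fixed_mem [CompleteSpace E] (U : E →ₗᵢ[𝕜] E)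
    {K : Submodule 𝕜 E} (hK : IsClosed (K : Set E)) (hsub : ∀ g, U g - g ∈ K)
    (hfix : ∀ g, U g = g → g ∈ K) : K = ⊤ := by
  have : CompleteSpace K := hK.completeSpace_coe
  rw [← Submodule.orthogonal_eq_bot_iff, Submodule.eq_bot_iff]
  intro x hx
  have hxK : x ∈ K := hfix x <|
    map_eq_self_of_forall_inner_map_sub_self_eq_zero U fun g => hx _ (hsub g)
  exact inner_self_eq_zero.1 (hx x hxK)

theorem tendsto_inner_of_forall_fixed [CompleteSpace E] (U : E →ₗᵢ[𝕜] E) {v : E} (hv : U v = v)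
    (hM : ∀ i, ‖u i‖ ≤ M) (hU : Tendsto (fun i => ‖U (u i) - u i‖) l (𝓝 0))
    (hfix : ∀ g, U g = g → Tendsto (fun i => ⟪u i, g⟫_𝕜) l (𝓝 ⟪v, g⟫_𝕜)) (f : E) :
    Tendsto (fun i => ⟪u i, f⟫_𝕜) l (𝓝 ⟪v, f⟫_𝕜) := by
  have mem_iff (g : E) : g ∈ weaklyNullSubmodule 𝕜 l (fun i => u i - v) ↔
      Tendsto (fun i => ⟪u i, g⟫_𝕜) l (𝓝 ⟪v, g⟫_𝕜) := by
    simp only [mem_weaklyNullSubmodule, inner_sub_left, tendsto_sub_nhds_zero_iff]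
  have hbound (i : ι) : ‖u i - v‖ ≤ M + ‖v‖ :=
    (norm_sub_le _ _).trans (add_le_add_left (hM i) _)
  have hinv : Tendsto (fun i => ‖U (u i - v) - (u i - v)‖) l (𝓝 0) := by
    simpa only [map_sub, hv, sub_sub_sub_cancel_right] using hU
  have htop := submodule_eq_top_of_map_sub_self_mem_of_fixed_mem U
    (isClosed_weaklyNullSubmodule hbound) (map_sub_self_mem_weaklyNullSubmodule U hinv)
    fun g hg => (mem_iff g).2 (hfix g hg)
  exact (mem_iff f).1 (htop ▸ Submodule.mem_top)

end Hilbert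

section Koopman

variable {X ι F : Type*} [MeasurableSpace X] {μ : Measure X} {T : X → X}
  [NormedAddCommGroup F] {p : ℝ≥0∞} {l : Filter ι} {D : ι → Set X}

theorem measureReal_symmDiff_preimage_of_leftInverse {S : X → X}
    (hT : MeasurePreserving T μ μ) (hS : Measurable S) (hST : Function.LeftInverse S T) {s : Set X}
    (hs : MeasurableSet s) :
    μ.real (s ∆ (T ⁻¹' s)) = μ.real (s ∆ (S ⁻¹' s)) := by
  have hpre : T ⁻¹' (s ∆ (S ⁻¹' s)) = s ∆ (T ⁻¹' s) := by
    rw [Set.preimage_symmDiff, ← Set.preimage_comp, hST.comp_eq_id, Set.preimage_id, symmDiff_comm]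
  rw [← hpre, hT.measureReal_preimage (hs.symmDiff (hS hs)).nullMeasurableSet]

theorem norm_compMeasurePreserving_indicatorConstLp_sub [Fact (1 ≤ p)] (hp : p ≠ ∞)
    (hT : MeasurePreserving T μ μ) {s : Set X} (hs : MeasurableSet s) (hμs : μ s ≠ ∞) (c : F) :
    ‖Lp.compMeasurePreserving T hT (indicatorConstLp p hs hμs c) - indicatorConstLp p hs hμs c‖ =
      ‖c‖ * μ.real (s ∆ (T ⁻¹' s)) ^ (1 / p.toReal) := by
  have hp₀ : p ≠ 0 := (one_pos.trans_le Fact.out).ne'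
  rw [Lp.indicatorConstLp_compMeasurePreserving, ← dist_eq_norm, dist_indicatorConstLp_eq_norm,
    norm_indicatorConstLp hp₀ hp, symmDiff_comm]

theorem tendsto_norm_compMeasurePreserving_indicatorConstLp_sub [Fact (1 ≤ p)] (hp : p ≠ ∞)
    (hT : MeasurePreserving T μ μ) (hD : ∀ j, MeasurableSet (D j)) (hμD : ∀ j, μ (D j) ≠ ∞)
    (hDT : Tendsto (fun j => μ.real (D j ∆ (T ⁻¹' D j))) l (𝓝 0)) (c : F) :
    Tendsto (fun j =>
      ‖Lp.compMeasurePreserving T hT (indicatorConstLp p (hD j) (hμD j) c) -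
        indicatorConstLp p (hD j) (hμD j) c‖) l (𝓝 0) := by
  have hexp : 0 < 1 / p.toReal :=
    one_div_pos.2 (ENNReal.toReal_pos (one_pos.trans_le Fact.out).ne' hp)
  simpa only [norm_compMeasurePreserving_indicatorConstLp_sub hp, Real.zero_rpow hexp.ne',
    mul_zero] using (hDT.rpow_const (.inr hexp.le)).const_mul ‖c‖

variable [IsFiniteMeasure μ]

theorem exists_eq_const_of_compMeasurePreserving_eq (hT : Ergodic T μ) {f : Lp F p μ}
    (hf : Lp.compMeasurePreserving T hT.toMeasurePreserving f = f) :
    ∃ c, f = Lp.const p μ c :=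
  let ⟨c, hc⟩ := hT.eq_const_of_compMeasurePreserving_eq (congrArg Subtype.val hf)
  ⟨c, Subtype.ext hc⟩

theorem setIntegral_Lp_const [NormedSpace ℝ F] [CompleteSpace F] (s : Set X) (c : F) :
    ∫ x in s, Lp.const p μ c x ∂μ = μ.real s • c := by
  rw [integral_congr_ae (ae_restrict_of_ae (Lp.coeFn_const p μ c))]
  exact setIntegral_const c

theorem inner_Lp_const_eq_inner_integral {𝕜 : Type*} [RCLike 𝕜] [InnerProductSpace 𝕜 F]
    [NormedSpace ℝ F] [CompleteSpace F] (c : F) (f : Lp F 2 μ) :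
    ⟪Lp.const 2 μ c, f⟫_𝕜 = ⟪c, ∫ x, f x ∂μ⟫_𝕜 := by
  rw [← indicatorConstLp_univ, L2.inner_indicatorConstLp_eq_inner_setIntegral, setIntegral_univ]

theorem tendsto_setIntegral_Lp_two_of_ergodic (hT : Ergodic T μ) (hD : ∀ j, MeasurableSet (D j))
    {a : ℝ} (hDa : Tendsto (fun j => μ.real (D j)) l (𝓝 (a * μ.real Set.univ)))
    (hDT : Tendsto (fun j => μ.real (D j ∆ (T ⁻¹' D j))) l (𝓝 0)) (f : Lp ℝ 2 μ) :
    Tendsto (fun j => ∫ x in D j, f x ∂μ) l (𝓝 (a * ∫ x, f x ∂μ)) := by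
  let U : Lp ℝ 2 μ →ₗᵢ[ℝ] Lp ℝ 2 μ := Lp.compMeasurePreservingₗᵢ ℝ T hT.toMeasurePreserving
  let u (j : ι) : Lp ℝ 2 μ := indicatorConstLp 2 (hD j) (measure_ne_top μ _) 1
  have inner_u (j : ι) (g : Lp ℝ 2 μ) : ⟪u j, g⟫_ℝ = ∫ x in D j, g x ∂μ :=
    L2.inner_indicatorConstLp_one _ _ g
  have inner_const (g : Lp ℝ 2 μ) : ⟪Lp.const 2 μ a, g⟫_ℝ = a * ∫ x, g x ∂μ := by
    rw [inner_Lp_const_eq_inner_integral, RCLike.inner_apply', conj_trivial]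
  have norm_u_le (j : ι) : ‖u j‖ ≤ μ.real Set.univ ^ (1 / (2 : ℝ≥0∞).toReal) := by
    refine norm_indicatorConstLp_le.trans ?_
    rw [norm_one, one_mul]
    gcongr
    exacts [measure_ne_top μ _, Set.subset_univ _]
  have tendsto_of_fixed (g : Lp ℝ 2 μ) (hg : U g = g) :
      Tendsto (fun j => ⟪u j, g⟫_ℝ) l (𝓝 ⟪Lp.const 2 μ a, g⟫_ℝ) := by
    obtain ⟨c, rfl⟩ := exists_eq_const_of_compMeasurePreserving_eq hT hg
    rw [inner_const, ← setIntegral_univ]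
    simpa only [inner_u, setIntegral_Lp_const, smul_eq_mul, mul_assoc] using hDa.mul_const c
  have hinv : Tendsto (fun j => ‖U (u j) - u j‖) l (𝓝 0) :=
    tendsto_norm_compMeasurePreserving_indicatorConstLp_sub ENNReal.ofNat_ne_top
      hT.toMeasurePreserving hD (fun _ => measure_ne_top μ _) hDT 1
  have hconst : U (Lp.const 2 μ a) = Lp.const 2 μ a := rfl
  simpa only [inner_u, inner_const] using
    tendsto_inner_of_forall_fixed U hconst norm_u_le hinv tendsto_of_fixed f

theorem indicator_ops_tendsto_weakly_smul_id_general (hT : Ergodic T μ)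
    (hD : ∀ j, MeasurableSet (D j)) {a : ℝ}
    (hDa : Tendsto (fun j => μ.real (D j)) l (𝓝 (a * μ.real Set.univ)))
    (hDT : Tendsto (fun j => μ.real (D j ∆ (T ⁻¹' D j))) l (𝓝 0))
    {C : Set X} (hC : MeasurableSet C) :
    Tendsto (fun j => μ.real (D j ∩ C)) l (𝓝 (a * μ.real C)) := by
  have hint (s : Set X) (hs : MeasurableSet s) :
      ∫ x in s, indicatorConstLp 2 hC (measure_ne_top μ C) (1 : ℝ) x ∂μ = μ.real (s ∩ C) := by
    simp [setIntegral_indicatorConstLp hs, Set.inter_comm C]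
  have h := tendsto_setIntegral_Lp_two_of_ergodic hT hD hDa hDT
    (indicatorConstLp 2 hC (measure_ne_top μ C) 1)
  rw [← setIntegral_univ, hint _ .univ, Set.univ_inter] at h
  simpa only [hint _ (hD _)] using h

end Koopman

/-- If `T` is an ergodic invertible measure-preserving transformation of a
probability space, and `D j` are measurable sets with `μ(D j) → a > 0` and
`μ(D j Δ T D j) → 0`, then for all measurable `A, B`:
`μ(D j ∩ A ∩ B) − a·μ(A ∩ B) → 0`, i.e. the indicator multiplication operators `D̂(j)`
converge weakly to `a·I`. -/
theorem indicator_ops_tendsto_weakly_smul_id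
    {X : Type*} [MeasurableSpace X] (μ : Measure X) [IsProbabilityMeasure μ]
    (T S : X → X) (hT : Ergodic T μ) (hS : MeasurePreserving S μ μ)
    (hST : Function.LeftInverse S T) (hTS : Function.RightInverse S T)
    (D : ℕ → Set X) (hDm : ∀ j, MeasurableSet (D j))
    (a : ℝ) (ha : 0 < a)
    (hDa : Tendsto (fun j => (μ (D j)).toReal) atTop (nhds a))
    (hDT : Tendsto (fun j => (μ (symmDiff (D j) (S ⁻¹' (D j)))).toReal) atTop (nhds 0)) :
    ∀ A B : Set X, MeasurableSet A → MeasurableSet B →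
      Tendsto (fun j => (μ (D j ∩ A ∩ B)).toReal - a * (μ (A ∩ B)).toReal)
        atTop (nhds 0) := by
  intro A B hA hB
  have hinv : Tendsto (fun j => μ.real (D j ∆ (T ⁻¹' D j))) atTop (𝓝 0) := by
    simpa only [measureReal_symmDiff_preimage_of_leftInverse hT.toMeasurePreserving hS.measurable
      hST (hDm _), measureReal_def] using hDT
  have hlim : Tendsto (fun j => μ.real (D j)) atTop (𝓝 (a * μ.real Set.univ)) := by
    rwa [probReal_univ, mul_one]
  simpa only [Set.inter_assoc, measureReal_def] using tendsto_sub_nhds_zero_iff.2 <|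
    indicator_ops_tendsto_weakly_smul_id_general hT hDm hlim hinv (hA.inter hB)
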